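/- Let d ≥ 2 and let s and t be n-tuples of transpositions in S_d = Equiv.Perm (Fin d), each of which is transitive (the subgroup generated by the entries acts transitively on Fin d). Then s and t are equivalent under the combination of Hurwitz moves and simultaneous conjugation — i.e. there exist a finite composition W of Hurwitz moves H_i and their inverses and an element g ∈ S_d such that W applied to (g s_1 g⁻¹, …, g s_n g⁻¹) equals t — if and only if the total monodromies s_1 s_2 ⋯ s_n and t_1 t_2 ⋯ t_n are conjugate in S_d. (This is the algebraic form of the classification theorem of Mulazzani–Piergallini and Berstein–Edmonds stated in Section 2.1 of the paper: two simple branched covers of the disc are equivalent if and only if their total monodromies are conjugate in S_d.) -/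

import Mathlib

/-- The `i`-th Hurwitz move on `n`-tuples in a group `G` (indices `0`-based:
this acts on the entries at positions `i` and `i+1`): it replaces the pair
`(a, b)` at positions `(i, i+1)` by `(a * b * a⁻¹, a)` and leaves all other
entries unchanged. -/
def hmove {G : Type*} [Group G] {n : ℕ} (i : ℕ) (hi : i + 1 < n) (t : Fin n → G) :
    Fin n → G := fun j =>
  if (j : ℕ) = i then t ⟨i, by omega⟩ * t ⟨i + 1, hi⟩ * (t ⟨i, by omega⟩)⁻¹
  else if (j : ℕ) = i + 1 then t ⟨i, by omega⟩
  else t j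

/-- One elementary Hurwitz step between tuples: applying a single Hurwitz move
or the inverse of a single Hurwitz move. -/
def hstep {G : Type*} [Group G] {n : ℕ} (s t : Fin n → G) : Prop :=
  ∃ (i : ℕ) (hi : i + 1 < n), t = hmove i hi s ∨ s = hmove i hi t

/-- Two tuples are Hurwitz equivalent if some finite composition of Hurwitz
moves and their inverses carries one to the other. -/
def HurwitzEquiv {G : Type*} [Group G] {n : ℕ} (s t : Fin n → G) : Prop :=
  Relation.ReflTransGen hstep s t

/-! Joining the sheets `x` and `y` by a transposition at the head of a tuple is always possible up
to Hurwitz moves, so a transposition can be split off two tuples with the same product `π`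
simultaneously. If `x` and `y` lie in different cycles of `π`, the remaining tuples are still
transitive and one inducts on the length. Otherwise `π` is transitive, and so is any tuple with
product `π`; either one of the tuples contains no cancelling pair `(τ, τ⁻¹)` up to Hurwitz moves,
in which case splitting off `(x π(x))` repeatedly determines it from `π`, or such pairs can be
removed from both tuples. The pairs themselves do not matter: moving a pair around an entry `a`
conjugates it by `a`, hence a pair can be conjugated by the whole symmetric group. -/

open Equiv MulAction Pointwise

/-- Hurwitz equivalence of tuples written as lists: the smallest equivalence relation that is
stable under prepending an entry and contains the Hurwitz move on the first two entries. Moves at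
later positions arise from `cons`. -/
inductive ListHurwitzEquiv {G : Type*} [Group G] : List G → List G → Prop
  | refl (l : List G) : ListHurwitzEquiv l l
  | symm {l m : List G} : ListHurwitzEquiv l m → ListHurwitzEquiv m l
  | trans {l m k : List G} : ListHurwitzEquiv l m → ListHurwitzEquiv m k → ListHurwitzEquiv l k
  | cons (a : G) {l m : List G} : ListHurwitzEquiv l m → ListHurwitzEquiv (a :: l) (a :: m)
  | move (a b : G) (l : List G) : ListHurwitzEquiv (a :: b :: l) (a * b * a⁻¹ :: a :: l)

local infix:50 " ∼ₕ " => ListHurwitzEquiv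

/-- The monodromy group of a tuple: the subgroup generated by its entries. -/
abbrev monodromyGroup {G : Type*} [Group G] (l : List G) : Subgroup G :=
  Subgroup.closure {g | g ∈ l}

theorem monodromyGroup_cons {G : Type*} [Group G] (a : G) (l : List G) :
    monodromyGroup (a :: l) = Subgroup.closure (insert a {g | g ∈ l}) :=
  congrArg Subgroup.closure (Set.ext fun _ ↦ List.mem_cons)

/-- A tuple has a cancelling pair if Hurwitz moves bring it into a form that starts with two
mutually inverse entries. For tuples of transpositions these are two equal transpositions. -/
def HasCancellingPair {G : Type*} [Group G] (l : List G) : Prop :=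
  ∃ (τ : G) (l' : List G), l ∼ₕ τ :: τ⁻¹ :: l'

namespace ListHurwitzEquiv

variable {G : Type*} [Group G] {l m : List G}

instance : Trans (ListHurwitzEquiv (G := G)) ListHurwitzEquiv ListHurwitzEquiv := ⟨trans⟩

theorem length_eq (h : l ∼ₕ m) : l.length = m.length := by
  induction h <;> simp_all

theorem prod_eq (h : l ∼ₕ m) : l.prod = m.prod := by
  induction h <;> simp_all [mul_assoc]

theorem forall_mem_iff {P : G → Prop} (hP : ∀ a b, P a → (P (a * b * a⁻¹) ↔ P b))
    (h : l ∼ₕ m) : (∀ g ∈ l, P g) ↔ ∀ g ∈ m, P g := by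
  induction h with
  | refl => rfl
  | symm _ ih => exact ih.symm
  | trans _ _ ih₁ ih₂ => exact ih₁.trans ih₂
  | cons a _ ih => simp only [List.forall_mem_cons, ih]
  | move a b l =>
    simp only [List.forall_mem_cons]
    grind

theorem monodromyGroup_eq (h : l ∼ₕ m) : monodromyGroup l = monodromyGroup m := by
  refine eq_of_forall_ge_iff fun H ↦ ?_
  rw [Subgroup.closure_le, Subgroup.closure_le]
  exact h.forall_mem_iff fun a b ha ↦
    (H.mul_mem_cancel_right (H.inv_mem ha)).trans (H.mul_mem_cancel_left ha)

theorem move_inv (a b : G) (l : List G) : a :: b :: l ∼ₕ b :: b⁻¹ * a * b :: l := by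
  simpa [mul_assoc] using (move b (b⁻¹ * a * b) l).symm

theorem exists_cons_of_mem {a : G} (ha : a ∈ l) : ∃ l', l ∼ₕ a :: l' := by
  induction l with
  | nil => simp at ha
  | cons b l ih =>
    obtain rfl | ha := List.mem_cons.1 ha
    · exact ⟨l, refl _⟩
    · obtain ⟨l', h⟩ := ih ha
      exact ⟨_, (cons b h).trans (move_inv b a l')⟩

theorem cons_pair_comm (a τ : G) (l : List G) : a :: τ :: τ⁻¹ :: l ∼ₕ τ :: τ⁻¹ :: a :: l := by
  simpa [mul_assoc] using
    (move_inv a τ (τ⁻¹ :: l)).trans (cons τ (move_inv (τ⁻¹ * a * τ) τ⁻¹ l))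

theorem pair_conj_of_mem {a : G} (ha : a ∈ l) (τ : G) :
    τ :: τ⁻¹ :: l ∼ₕ a * τ * a⁻¹ :: (a * τ * a⁻¹)⁻¹ :: l := by
  obtain ⟨l', h⟩ := exists_cons_of_mem ha
  calc
    τ :: τ⁻¹ :: l ∼ₕ τ :: τ⁻¹ :: a :: l' := cons _ (cons _ h)
    _ ∼ₕ a :: τ :: τ⁻¹ :: l' := (cons_pair_comm a τ l').symm
    _ ∼ₕ a * τ * a⁻¹ :: a :: τ⁻¹ :: l' := move a τ _
    _ ∼ₕ a * τ * a⁻¹ :: a * τ⁻¹ * a⁻¹ :: a :: l' := cons _ (move a τ⁻¹ l')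
    _ ∼ₕ a * τ * a⁻¹ :: a * τ⁻¹ * a⁻¹ :: l := cons _ (cons _ h.symm)
    _ = a * τ * a⁻¹ :: (a * τ * a⁻¹)⁻¹ :: l := by rw [conj_inv]

theorem pair_conj {g : G} (hg : g ∈ monodromyGroup l) (τ : G) :
    τ :: τ⁻¹ :: l ∼ₕ g * τ * g⁻¹ :: (g * τ * g⁻¹)⁻¹ :: l := by
  induction hg using Subgroup.closure_induction generalizing τ with
  | mem a ha => exact pair_conj_of_mem ha τ
  | one => simpa using refl _
  | mul a b _ _ iha ihb => simpa [mul_assoc] using (ihb τ).trans (iha (b * τ * b⁻¹))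
  | inv a _ iha => simpa [mul_assoc] using (iha (a⁻¹ * τ * a)).symm

theorem pair_congr_of_isConj {σ τ : G} (hl : monodromyGroup l = ⊤) (h : IsConj σ τ) :
    σ :: σ⁻¹ :: l ∼ₕ τ :: τ⁻¹ :: l := by
  obtain ⟨g, rfl⟩ := isConj_iff.1 h
  exact pair_conj (hl ▸ Subgroup.mem_top g) σ

end ListHurwitzEquiv

open ListHurwitzEquiv

theorem HasCancellingPair.of_listHurwitzEquiv {G : Type*} [Group G] {l m : List G} (h : l ∼ₕ m)
    (hm : HasCancellingPair m) : HasCancellingPair l :=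
  let ⟨τ, m', h'⟩ := hm
  ⟨τ, m', h.trans h'⟩

theorem HasCancellingPair.cons {G : Type*} [Group G] {l : List G} (a : G)
    (hl : HasCancellingPair l) : HasCancellingPair (a :: l) :=
  let ⟨τ, l', h⟩ := hl
  ⟨τ, a :: l', (h.cons a).trans (cons_pair_comm a τ l')⟩

section Swap

variable {α : Type*} [DecidableEq α]

theorem isSwap_conj {f : Perm α} (hf : f.IsSwap) (g : Perm α) : (g * f * g⁻¹).IsSwap := by
  obtain ⟨x, y, hxy, rfl⟩ := hf
  exact ⟨g x, g y, g.injective.ne hxy, (swap_apply_apply g x y).symm⟩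

theorem isSwap_conj_iff {f g : Perm α} : (g * f * g⁻¹).IsSwap ↔ f.IsSwap :=
  ⟨fun h ↦ by simpa [mul_assoc] using isSwap_conj h g⁻¹, fun h ↦ isSwap_conj h g⟩

theorem isConj_of_isSwap {σ τ : Perm α} (hσ : σ.IsSwap) (hτ : τ.IsSwap) : IsConj σ τ := by
  obtain ⟨x, y, hxy, rfl⟩ := hσ
  obtain ⟨a, b, hab, rfl⟩ := hτ
  exact Perm.isConj_swap hxy hab

theorem isSwap_inv {σ : Perm α} (hσ : σ.IsSwap) : σ⁻¹.IsSwap := by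
  obtain ⟨x, y, hxy, rfl⟩ := hσ
  exact ⟨x, y, hxy, swap_inv x y⟩

theorem swap_conj_swap {x b y : α} (hxy : x ≠ y) (hby : b ≠ y) :
    swap x b * swap b y * (swap x b)⁻¹ = swap x y := by
  rw [← swap_apply_apply, swap_apply_right, swap_apply_of_ne_of_ne hxy.symm hby.symm]

theorem exists_swap_eq_of_apply_ne {σ : Perm α} (hσ : σ.IsSwap) {x : α} (hx : σ x ≠ x) :
    ∃ b, σ = swap x b := by
  obtain ⟨a, b, -, rfl⟩ := hσ
  obtain ⟨-, rfl | rfl⟩ := swap_apply_ne_self_iff.1 hx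
  · exact ⟨b, rfl⟩
  · exact ⟨a, swap_comm a x⟩

theorem exists_swap_mem_of_swap_mem_closure {S : Set (Perm α)} (hS : ∀ σ ∈ S, σ.IsSwap) {x y : α}
    (hxy : x ≠ y) (h : swap x y ∈ Subgroup.closure S) : ∃ b, swap x b ∈ S := by
  by_contra! hx
  have hfix : Subgroup.closure S ≤ stabilizer (Perm α) x := by
    refine (Subgroup.closure_le _).2 fun σ hσ ↦ ?_
    by_contra hσx
    obtain ⟨b, rfl⟩ := exists_swap_eq_of_apply_ne (hS σ hσ) hσx
    exact hx b hσ
  have : swap x y x = x := hfix h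
  exact hxy (by simpa using this.symm)

theorem closure_insert_swap_le_stabilizer (S : Set (Perm α)) (x y : α) :
    Subgroup.closure (insert (swap x y) S) ≤ stabilizer (Perm α)
      (orbit (Subgroup.closure S) x ∪ orbit (Subgroup.closure S) y) := by
  refine (Subgroup.closure_le _).2 (Set.insert_subset ?_ fun σ hσ ↦ ?_)
  · refine mem_stabilizer_set.2 fun z ↦ ?_
    obtain rfl | hx := eq_or_ne z x
    · simp
    obtain rfl | hy := eq_or_ne z y
    · simp
    rw [Perm.smul_def, swap_apply_of_ne_of_ne hx hy]
  · have hsmul (z : α) : σ • orbit (Subgroup.closure S) z = orbit (Subgroup.closure S) z :=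
      smul_orbit (⟨σ, Subgroup.subset_closure hσ⟩ : Subgroup.closure S) z
    simp only [SetLike.mem_coe, mem_stabilizer_iff, Set.smul_set_union, hsmul]

theorem swap_mem_closure_or_of_swap_mem_closure_insert {S : Set (Perm α)}
    (hS : ∀ σ ∈ S, σ.IsSwap) {x b y : α} (h : swap x y ∈ Subgroup.closure (insert (swap x b) S)) :
    swap x y ∈ Subgroup.closure S ∨ swap b y ∈ Subgroup.closure S := by
  have hy := (mem_stabilizer_set.1 (closure_insert_swap_le_stabilizer S x b h) x).2
    (Or.inl (mem_orbit_self x))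
  rw [Perm.smul_def, swap_apply_left] at hy
  simpa only [swap_mem_closure_isSwap hS, mem_orbit_symm (a₂ := y), Set.mem_union] using hy

variable {l m : List (Perm α)}

theorem ListHurwitzEquiv.forall_isSwap_iff (h : l ∼ₕ m) :
    (∀ σ ∈ l, σ.IsSwap) ↔ ∀ σ ∈ m, σ.IsSwap :=
  h.forall_mem_iff fun _ _ _ ↦ isSwap_conj_iff

theorem HasCancellingPair.exists_isSwap (h : HasCancellingPair l) (hl : ∀ σ ∈ l, σ.IsSwap) :
    ∃ σ l', l ∼ₕ σ :: σ⁻¹ :: l' ∧ σ.IsSwap ∧ (∀ σ ∈ l', σ.IsSwap) ∧ l'.prod = l.prod ∧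
      l.length = l'.length + 2 := by
  obtain ⟨σ, l', hl'⟩ := h
  have hσl' := List.forall_mem_cons.1 (hl'.forall_isSwap_iff.1 hl)
  exact ⟨σ, l', hl', hσl'.1, (List.forall_mem_cons.1 hσl'.2).2, by simp [hl'.prod_eq],
    hl'.length_eq⟩

theorem exists_listHurwitzEquiv_swap_cons (hl : ∀ σ ∈ l, σ.IsSwap) {x y : α} (hxy : x ≠ y)
    (h : swap x y ∈ monodromyGroup l) : ∃ l', l ∼ₕ swap x y :: l' := by
  induction hn : l.length using Nat.strong_induction_on generalizing l x y with
  | _ n ih =>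
    obtain ⟨b, hb⟩ := exists_swap_mem_of_swap_mem_closure hl hxy h
    obtain ⟨r, hr⟩ := exists_cons_of_mem hb
    have hr_swap := (List.forall_mem_cons.1 (hr.forall_isSwap_iff.1 hl)).2
    have hr_len : r.length < n := by simp [← hn, hr.length_eq]
    rw [hr.monodromyGroup_eq, monodromyGroup_cons] at h
    obtain rfl | hby := eq_or_ne b y
    · exact ⟨r, hr⟩
    obtain h | h := swap_mem_closure_or_of_swap_mem_closure_insert hr_swap h
    · obtain ⟨r', hr'⟩ := ih _ hr_len hr_swap hxy h rfl
      exact ⟨_, hr.trans ((hr'.cons _).trans (move_inv _ _ _))⟩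
    · obtain ⟨r', hr'⟩ := ih _ hr_len hr_swap hby h rfl
      refine ⟨swap x b :: r', ?_⟩
      rw [← swap_conj_swap hxy hby]
      exact hr.trans ((hr'.cons _).trans (move _ _ _))

theorem exists_listHurwitzEquiv_common_swap_cons (hl : ∀ σ ∈ l, σ.IsSwap) (hm : ∀ σ ∈ m, σ.IsSwap)
    (hprod : l.prod = m.prod) {x y : α} (hxy : x ≠ y) (hxl : swap x y ∈ monodromyGroup l)
    (hxm : swap x y ∈ monodromyGroup m) :
    ∃ l' m', l ∼ₕ swap x y :: l' ∧ m ∼ₕ swap x y :: m' ∧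
      (∀ σ ∈ l', σ.IsSwap) ∧ (∀ σ ∈ m', σ.IsSwap) ∧ l'.prod = m'.prod ∧
      l.length = l'.length + 1 ∧ m.length = m'.length + 1 := by
  obtain ⟨l', hl'⟩ := exists_listHurwitzEquiv_swap_cons hl hxy hxl
  obtain ⟨m', hm'⟩ := exists_listHurwitzEquiv_swap_cons hm hxy hxm
  refine ⟨l', m', hl', hm', (List.forall_mem_cons.1 (hl'.forall_isSwap_iff.1 hl)).2,
    (List.forall_mem_cons.1 (hm'.forall_isSwap_iff.1 hm)).2, mul_left_cancel (a := swap x y) ?_,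
    hl'.length_eq, hm'.length_eq⟩
  simpa [hl'.prod_eq, hm'.prod_eq] using hprod

theorem swap_mem_monodromyGroup_of_sameCycle (hl : ∀ σ ∈ l, σ.IsSwap) {x y : α}
    (h : l.prod.SameCycle x y) : swap x y ∈ monodromyGroup l := by
  obtain ⟨i, hi⟩ := h.symm
  have hprod : l.prod ∈ monodromyGroup l := list_prod_mem fun _ hσ ↦ Subgroup.subset_closure hσ
  exact (swap_mem_closure_isSwap hl).2 ⟨⟨l.prod ^ i, zpow_mem hprod i⟩, hi⟩

theorem listHurwitzEquiv_of_not_hasCancellingPair (hl : ∀ σ ∈ l, σ.IsSwap) (hm : ∀ σ ∈ m, σ.IsSwap)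
    (hpair : ¬ HasCancellingPair l) (hprod : l.prod = m.prod) (hlen : m.length ≤ l.length) :
    l ∼ₕ m := by
  induction hn : l.length using Nat.strong_induction_on generalizing l m with
  | _ n ih =>
    obtain _ | ⟨e, r⟩ := l
    · rw [List.length_eq_zero_iff.1 (Nat.le_zero.1 hlen)]
      exact refl _
    have hprod_ne : (e :: r).prod ≠ 1 := by
      intro h
      have he := hl e List.mem_cons_self
      have hr_prod : r.prod = [e⁻¹].prod := by
        rw [List.prod_singleton]
        exact eq_inv_of_mul_eq_one_right (by simpa only [List.prod_cons] using h)
      obtain rfl | hr := eq_or_ne r []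
      · exact he.isCycle.ne_one (by simpa using h)
      have hr_equiv : r ∼ₕ [e⁻¹] := ih _ (by simp [← hn]) (List.forall_mem_cons.1 hl).2
        (by simpa using isSwap_inv he) (mt (.cons e) hpair) hr_prod
        (List.length_pos_iff.2 hr) rfl
      exact hpair ⟨e, [], hr_equiv.cons e⟩
    obtain ⟨x, hx⟩ : ∃ x, (e :: r).prod x ≠ x := by
      by_contra! h
      exact hprod_ne (Equiv.ext h)
    have hcycle : (e :: r).prod.SameCycle x ((e :: r).prod x) :=
      Perm.sameCycle_apply_right.2 .rfl
    obtain ⟨l', m', hl', hm', hl'_swap, hm'_swap, hprod', hl'_len, hm'_len⟩ :=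
      exists_listHurwitzEquiv_common_swap_cons hl hm hprod hx.symm
        (swap_mem_monodromyGroup_of_sameCycle hl hcycle)
        (swap_mem_monodromyGroup_of_sameCycle hm (hprod ▸ hcycle))
    have htail : l' ∼ₕ m' := ih _ (by omega) hl'_swap hm'_swap
      (fun h ↦ hpair (.of_listHurwitzEquiv hl' (h.cons _))) hprod' (by omega) rfl
    exact hl'.trans ((htail.cons _).trans hm'.symm)

theorem sameCycle_swap_mul_of_not_sameCycle [Finite α] {π : Perm α} {x y : α}
    (h : ¬ π.SameCycle x y) : (swap x y * π).SameCycle x y := by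
  by_contra hn
  set ρ := swap x y * π with hρ
  -- `π` maps `A` to itself, so `π⁻¹ x` lies in `A`, but `ρ` sends it to `y`.
  set A := {z | ρ.SameCycle x z ∧ π.SameCycle x z}
  have hπA : ∀ z ∈ A, π z ≠ x → π z ∈ A := by
    rintro z ⟨hρz, hπz⟩ hzx
    have hπz' : π.SameCycle x (π z) := Perm.sameCycle_apply_right.2 hπz
    have hzy : π z ≠ y := fun hzy ↦ h (hzy ▸ hπz')
    refine ⟨?_, hπz'⟩
    have hρz' : ρ z = π z := by rw [hρ, Perm.mul_apply, swap_apply_of_ne_of_ne hzx hzy]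
    exact hρz' ▸ Perm.sameCycle_apply_right.2 hρz
  have hxA : x ∈ A := ⟨.rfl, .rfl⟩
  have hA : π ∈ stabilizer (Perm α) A := by
    refine (mem_stabilizer_set' A.toFinite).2 fun z hz ↦ ?_
    by_cases hzx : π z = x
    · rwa [Perm.smul_def, hzx]
    · exact hπA z hz hzx
  have hmem : π⁻¹ x ∈ A := by
    simpa using (mem_stabilizer_set.1 (inv_mem hA) x).2 hxA
  have hρ_apply : ρ (π⁻¹ x) = y := by simp [hρ]
  exact hn (hρ_apply ▸ Perm.sameCycle_apply_right.2 hmem.1)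

theorem monodromyGroup_eq_of_not_sameCycle [Finite α] {l' : List (Perm α)} {x y : α}
    (h : l ∼ₕ swap x y :: l') (hl' : ∀ σ ∈ l', σ.IsSwap) (hn : ¬ l.prod.SameCycle x y) :
    monodromyGroup l' = monodromyGroup l := by
  have hprod : l'.prod = swap x y * l.prod := by simp [h.prod_eq]
  have hmem : swap x y ∈ monodromyGroup l' :=
    swap_mem_monodromyGroup_of_sameCycle hl' (hprod ▸ sameCycle_swap_mul_of_not_sameCycle hn)
  rw [h.monodromyGroup_eq]
  refine le_antisymm (Subgroup.closure_mono fun _ ↦ List.mem_cons_of_mem _) ?_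
  rw [Subgroup.closure_le]
  exact List.forall_mem_cons.2 ⟨hmem, fun _ ↦ (Subgroup.subset_closure ·)⟩

theorem monodromyGroup_eq_top_of_sameCycle [Finite α] (hl : ∀ σ ∈ l, σ.IsSwap)
    (h : ∀ x y, l.prod.SameCycle x y) : monodromyGroup l = ⊤ := by
  rw [eq_top_iff, ← Perm.closure_isSwap, Subgroup.closure_le]
  rintro _ ⟨x, y, -, rfl⟩
  exact swap_mem_monodromyGroup_of_sameCycle hl (h x y)

theorem listHurwitzEquiv_of_prod_eq [Finite α] (hl : ∀ σ ∈ l, σ.IsSwap) (hm : ∀ σ ∈ m, σ.IsSwap)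
    (hlt : monodromyGroup l = ⊤) (hmt : monodromyGroup m = ⊤) (hlen : l.length = m.length)
    (hprod : l.prod = m.prod) : l ∼ₕ m := by
  induction hn : l.length using Nat.strong_induction_on generalizing l m with
  | _ n ih =>
    by_cases hcycle : ∀ x y, l.prod.SameCycle x y
    · by_cases hl_pair : HasCancellingPair l
      swap
      · exact listHurwitzEquiv_of_not_hasCancellingPair hl hm hl_pair hprod hlen.ge
      by_cases hm_pair : HasCancellingPair m
      swap
      · exact (listHurwitzEquiv_of_not_hasCancellingPair hm hl hm_pair hprod.symm hlen.le).symm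
      obtain ⟨σ, l', hl', hσ, hl'_swap, hl'_prod, hl'_len⟩ := hl_pair.exists_isSwap hl
      obtain ⟨τ, m', hm', hτ, hm'_swap, hm'_prod, hm'_len⟩ := hm_pair.exists_isSwap hm
      have hlt' : monodromyGroup l' = ⊤ :=
        monodromyGroup_eq_top_of_sameCycle hl'_swap (hl'_prod ▸ hcycle)
      have hmt' : monodromyGroup m' = ⊤ :=
        monodromyGroup_eq_top_of_sameCycle hm'_swap (hm'_prod ▸ hprod ▸ hcycle)
      have htail : l' ∼ₕ m' :=
        ih _ (by omega) hl'_swap hm'_swap hlt' hmt' (by omega)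
          (hl'_prod.trans (hprod.trans hm'_prod.symm)) rfl
      calc
        l ∼ₕ σ :: σ⁻¹ :: l' := hl'
        _ ∼ₕ σ :: σ⁻¹ :: m' := (htail.cons _).cons _
        _ ∼ₕ τ :: τ⁻¹ :: m' := pair_congr_of_isConj hmt' (isConj_of_isSwap hσ hτ)
        _ ∼ₕ m := hm'.symm
    · push Not at hcycle
      obtain ⟨x, y, hxy⟩ := hcycle
      have hne : x ≠ y := fun h ↦ hxy (h.sameCycle _)
      obtain ⟨l', m', hl', hm', hl'_swap, hm'_swap, hprod', hl'_len, hm'_len⟩ :=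
        exists_listHurwitzEquiv_common_swap_cons hl hm hprod hne (hlt ▸ Subgroup.mem_top _)
          (hmt ▸ Subgroup.mem_top _)
      have htail : l' ∼ₕ m' := ih _ (by omega) hl'_swap hm'_swap
        ((monodromyGroup_eq_of_not_sameCycle hl' hl'_swap hxy).trans hlt)
        ((monodromyGroup_eq_of_not_sameCycle hm' hm'_swap (hprod ▸ hxy)).trans hmt)
        (by omega) hprod' rfl
      exact hl'.trans ((htail.cons _).trans hm'.symm)

end Swap

section Tuple

variable {G : Type*} [Group G] {n : ℕ}

theorem ofFn_hmove_zero (s : Fin (n + 2) → G) :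
    List.ofFn (hmove 0 (by omega) s) =
      s 0 * s 1 * (s 0)⁻¹ :: s 0 :: List.ofFn fun i : Fin n ↦ s i.succ.succ := by
  simp [List.ofFn_succ, hmove]

theorem hmove_succ (i : ℕ) (hi : i + 1 < n) (s : Fin (n + 1) → G) :
    hmove (i + 1) (by omega) s = Fin.cons (s 0) (hmove i hi (Fin.tail s)) := by
  funext j
  cases j using Fin.cases with
  | zero => simp [hmove]
  | succ j =>
    rw [Fin.cons_succ]
    simp [hmove, Fin.tail, Fin.succ]

theorem listHurwitzEquiv_ofFn_hmove (i : ℕ) (hi : i + 1 < n) (s : Fin n → G) :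
    List.ofFn s ∼ₕ List.ofFn (hmove i hi s) := by
  induction i generalizing n with
  | zero =>
    obtain ⟨n, rfl⟩ := Nat.exists_eq_add_of_le' hi
    rw [ofFn_hmove_zero, List.ofFn_succ, List.ofFn_succ]
    exact move _ _ _
  | succ i ih =>
    obtain ⟨n, rfl⟩ := Nat.exists_eq_add_of_le' (Nat.zero_lt_of_lt hi)
    rw [hmove_succ i (by omega), List.ofFn_succ, List.ofFn_cons]
    exact cons _ (ih _ _)

instance : Std.Symm (hstep (G := G) (n := n)) :=
  ⟨fun _ _ ⟨i, hi, h⟩ ↦ ⟨i, hi, h.symm⟩⟩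

theorem hstep_cons (a : G) {s t : Fin n → G} (h : hstep s t) :
    hstep (Fin.cons a s : Fin (n + 1) → G) (Fin.cons a t) := by
  obtain ⟨i, hi, h⟩ := h
  refine ⟨i + 1, by omega, ?_⟩
  simpa only [hmove_succ i hi, Fin.cons_zero, Fin.tail_cons,
    (Fin.cons_right_injective (α := fun _ ↦ G) a).eq_iff] using h

theorem HurwitzEquiv.cons (a : G) {s t : Fin n → G} (h : HurwitzEquiv s t) :
    HurwitzEquiv (Fin.cons a s : Fin (n + 1) → G) (Fin.cons a t) :=
  Relation.ReflTransGen.lift (Fin.cons (α := fun _ ↦ G) a) (fun _ _ ↦ hstep_cons a) _ _ h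

theorem HurwitzEquiv.of_ofFn {s t : Fin n → G} (h : List.ofFn s ∼ₕ List.ofFn t) :
    HurwitzEquiv s t := by
  generalize hl : List.ofFn s = l at h
  generalize hm : List.ofFn t = m at h
  induction h generalizing n with
  | refl =>
    rw [List.ofFn_injective (hl.trans hm.symm)]
    exact .refl
  | symm _ ih => exact symm_of (Relation.ReflTransGen hstep) (ih hm hl)
  | @trans l m k hlm _ ih₁ ih₂ =>
    obtain rfl : m.length = n := by rw [← hlm.length_eq, ← hl, List.length_ofFn]
    exact (ih₁ hl (List.ofFn_get m)).trans (ih₂ (List.ofFn_get m) hm)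
  | @cons a l m _ ih =>
    obtain ⟨n, rfl⟩ : ∃ k, n = k + 1 := ⟨l.length, by simpa using congrArg List.length hl⟩
    rw [List.ofFn_succ, List.cons.injEq] at hl hm
    have htail : HurwitzEquiv (Fin.tail s) (Fin.tail t) := ih hl.2 hm.2
    rw [← Fin.cons_self_tail s, ← Fin.cons_self_tail t, hl.1, hm.1]
    exact htail.cons a
  | move a b l =>
    obtain ⟨n, rfl⟩ : ∃ k, n = k + 2 := ⟨l.length, by simpa using congrArg List.length hl⟩
    refine .single ⟨0, by omega, .inl (List.ofFn_injective ?_)⟩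
    simp only [List.ofFn_succ, List.cons.injEq] at hl
    obtain ⟨rfl, rfl, rfl⟩ := hl
    rw [hm, ofFn_hmove_zero]
    rfl

theorem HurwitzEquiv.ofFn {s t : Fin n → G} (h : HurwitzEquiv s t) :
    List.ofFn s ∼ₕ List.ofFn t := by
  induction h with
  | refl => exact refl _
  | tail _ h_move ih =>
    obtain ⟨i, hi, rfl | rfl⟩ := h_move
    · exact ih.trans (listHurwitzEquiv_ofFn_hmove i hi _)
    · exact ih.trans (listHurwitzEquiv_ofFn_hmove i hi _).symm

theorem hurwitzEquiv_iff_ofFn {s t : Fin n → G} :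
    HurwitzEquiv s t ↔ List.ofFn s ∼ₕ List.ofFn t :=
  ⟨HurwitzEquiv.ofFn, HurwitzEquiv.of_ofFn⟩

theorem ofFn_conj (g : G) (s : Fin n → G) :
    (List.ofFn fun j ↦ g * s j * g⁻¹) = (List.ofFn s).map (MulAut.conj g) := by
  rw [List.map_ofFn]
  rfl

theorem prod_map_conj (g : G) (l : List G) : (l.map (MulAut.conj g)).prod = g * l.prod * g⁻¹ :=
  (map_list_prod (MulAut.conj g) l).symm

theorem monodromyGroup_map {H : Type*} [Group H] (f : G →* H) (l : List G) :
    monodromyGroup (l.map f) = (monodromyGroup l).map f := by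
  rw [MonoidHom.map_closure]
  exact congrArg Subgroup.closure (Set.ext fun _ ↦ List.mem_map)

theorem monodromyGroup_ofFn (s : Fin n → G) :
    monodromyGroup (List.ofFn s) = Subgroup.closure (Set.range s) :=
  congrArg Subgroup.closure (Set.ext fun g ↦ List.mem_ofFn' s g)

end Tuple

theorem hurwitz_conj_equiv_iff_isConj_prod_general {α : Type*} [DecidableEq α] [Finite α] {n : ℕ}
    {s t : Fin n → Perm α} (hs : ∀ j, (s j).IsSwap) (ht : ∀ j, (t j).IsSwap)
    [IsPretransitive (Subgroup.closure (Set.range s)) α]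
    [IsPretransitive (Subgroup.closure (Set.range t)) α] :
    (∃ g : Perm α, HurwitzEquiv (fun j ↦ g * s j * g⁻¹) t) ↔
      IsConj (List.ofFn s).prod (List.ofFn t).prod := by
  simp_rw [isConj_iff, hurwitzEquiv_iff_ofFn, ofFn_conj, ← prod_map_conj]
  refine exists_congr fun g ↦ ⟨prod_eq, fun hprod ↦ ?_⟩
  have hs_top : monodromyGroup (List.ofFn s) = ⊤ := by
    rw [monodromyGroup_ofFn]
    exact closure_of_isSwap_of_isPretransitive (Set.forall_mem_range.2 hs)
  have ht_top : monodromyGroup (List.ofFn t) = ⊤ := by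
    rw [monodromyGroup_ofFn]
    exact closure_of_isSwap_of_isPretransitive (Set.forall_mem_range.2 ht)
  have hconj_top : monodromyGroup ((List.ofFn s).map (MulAut.conj g)) = ⊤ := by
    have := monodromyGroup_map (MulAut.conj g).toMonoidHom (List.ofFn s)
    rw [hs_top, Subgroup.map_top_of_surjective _ (MulAut.conj g).surjective] at this
    exact this
  exact listHurwitzEquiv_of_prod_eq
    (by simpa [List.forall_mem_ofFn_iff] using fun j ↦ isSwap_conj (hs j) g)
    (by simpa [List.forall_mem_ofFn_iff] using ht) hconj_top ht_top (by simp) hprod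

/-- Classification of simple branched covers of the disc
(Mulazzani–Piergallini, Berstein–Edmonds), algebraic form: two transitive
`n`-tuples of transpositions in `S_d` are related by a finite composition of
Hurwitz moves and their inverses together with a simultaneous conjugation if
and only if their total monodromies are conjugate in `S_d`. -/
theorem hurwitz_conj_equiv_iff_isConj_prod (d n : ℕ) (hd : 2 ≤ d)
    (s t : Fin n → Equiv.Perm (Fin d))
    (hs : ∀ j, (s j).IsSwap) (ht : ∀ j, (t j).IsSwap)
    (hstrans : ∀ x y : Fin d, ∃ p ∈ Subgroup.closure (Set.range s), p x = y)
    (httrans : ∀ x y : Fin d, ∃ p ∈ Subgroup.closure (Set.range t), p x = y) :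
    (∃ g : Equiv.Perm (Fin d), HurwitzEquiv (fun j => g * s j * g⁻¹) t)
      ↔ IsConj (List.ofFn s).prod (List.ofFn t).prod := by
  have : IsPretransitive (Subgroup.closure (Set.range s)) (Fin d) :=
    ⟨fun x y ↦ let ⟨p, hp, h⟩ := hstrans x y; ⟨⟨p, hp⟩, h⟩⟩
  have : IsPretransitive (Subgroup.closure (Set.range t)) (Fin d) :=
    ⟨fun x y ↦ let ⟨p, hp, h⟩ := httrans x y; ⟨⟨p, hp⟩, h⟩⟩
  exact hurwitz_conj_equiv_iff_isConj_prod_general hs ht
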